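/- arXiv:2311.10183 — 5 statements merged into one kernel-verified Lean document; each statement's English description precedes it below -/
import Mathlib

section
/- Let S be a positive signature. The reflexive-transitive closure ≼ of the easterly wind relation ⇀ on reduced S-forests is a partial order; in particular, ≼ is antisymmetric. -/
open scoped BigOperators

/-- An `S`-term over a signature given by a type `S` of generators with arity map `ar`. -/
inductive STerm (S : Type) (ar : S → ℕ) : Type
  | leaf : STerm S ar
  | node (g : S) (c : Fin (ar g) → STerm S ar) : STerm S ar

namespace STerm

variable {S : Type} {ar : S → ℕ}

/-- The arity of a term: its number of leaves. -/
def arity : STerm S ar → ℕ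
  | leaf => 1
  | node _ c => ∑ i, (c i).arity

/-- The degree of a term: its number of internal nodes. -/
def degree : STerm S ar → ℕ
  | leaf => 0
  | node _ c => 1 + ∑ i, (c i).degree

/-- The word of decorations of internal nodes along left-to-right preorder traversal. -/
def decs : STerm S ar → List S
  | leaf => []
  | node g c => g :: (List.ofFn fun i => (c i).decs).flatten

/-- Grafting `t⟨l⟩`: the `i`-th leaf (left-to-right) is replaced by the `i`-th entry of `l`. -/
def graftList : STerm S ar → List (STerm S ar) → STerm S ar
  | leaf, l => l.headD leaf
  | node g c, l =>
      node g fun i =>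
        (c i).graftList
          ((l.drop (∑ j : Fin (ar g), if (j : ℕ) < (i : ℕ) then (c j).arity else 0)).take
            (c i).arity)

/-- Grafting a term at the rightmost leaf. -/
def graftRight : STerm S ar → STerm S ar → STerm S ar
  | leaf, s => s
  | node g c, s => node g fun i => if (i : ℕ) = ar g - 1 then (c i).graftRight s else c i

/-- Grafting a term at the leftmost (first) leaf, i.e. `∘₁`. -/
def graftFirst : STerm S ar → STerm S ar → STerm S ar
  | leaf, s => s
  | node g c, s => node g fun i => if (i : ℕ) = 0 then (c i).graftFirst s else c i

/-- Preorder traversal word: `none` for leaves, `some g` for an internal node decorated by `g`. -/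
def preo : STerm S ar → List (Option S)
  | leaf => [none]
  | node g c => some g :: (List.ofFn fun i => (c i).preo).flatten

/-- The number of extremal leaves of a term: leaves which come after every internal
node in the preorder traversal. -/
def extremalCount (t : STerm S ar) : ℕ :=
  (t.preo.reverse.takeWhile fun o => o.isNone).length

/-- The list of edges `(i, j, i')` (`i'` is the `j`-th child of `i`, `j` being 1-based) between
internal nodes, internal nodes being numbered from `0` in preorder. -/
def edges : STerm S ar → List (ℕ × ℕ × ℕ)
  | leaf => []
  | node g c =>
      (List.ofFn fun i : Fin (ar g) =>
        (match c i with
          | leaf => ([] : List (ℕ × ℕ × ℕ))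
          | node _ _ =>
            [(0, (i : ℕ) + 1,
               1 + ∑ j : Fin (ar g), if (j : ℕ) < (i : ℕ) then (c j).degree else 0)]) ++
          (c i).edges.map fun e =>
            (e.1 + (1 + ∑ j : Fin (ar g), if (j : ℕ) < (i : ℕ) then (c j).degree else 0), e.2.1,
              e.2.2 + (1 + ∑ j : Fin (ar g), if (j : ℕ) < (i : ℕ) then (c j).degree else 0))).flatten

/-- The easterly wind move inside a term: a subterm rooted at an internal node which has an
immediate left sibling is detached (replaced by a leaf) and grafted onto the rightmost leaf of
the subtree rooted at this left sibling. -/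
inductive TermMove : STerm S ar → STerm S ar → Prop
  | here (g : S) (c : Fin (ar g) → STerm S ar) (j j' : Fin (ar g))
      (hj : (j' : ℕ) = (j : ℕ) + 1) (hne : c j' ≠ leaf) :
      TermMove (node g c)
        (node g (Function.update (Function.update c j ((c j).graftRight (c j'))) j' leaf))
  | child (g : S) (c : Fin (ar g) → STerm S ar) (i : Fin (ar g)) (t' : STerm S ar) :
      TermMove (c i) t' → TermMove (node g c) (node g (Function.update c i t'))

end STerm
section Forest

variable {S : Type} {ar : S → ℕ}

/-- A forest is reduced when none of its trees is a leaf. -/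
def IsReducedF (f : List (STerm S ar)) : Prop := ∀ t ∈ f, t ≠ STerm.leaf

/-- The easterly wind move on forests: either the root of a tree having an immediate left
sibling tree is detached and grafted onto the rightmost leaf of this left sibling, or a move
happens inside one of the trees. -/
inductive ForestMove : List (STerm S ar) → List (STerm S ar) → Prop
  | root (pre : List (STerm S ar)) (t t' : STerm S ar) (post : List (STerm S ar)) :
      t' ≠ STerm.leaf → ForestMove (pre ++ t :: t' :: post) (pre ++ t.graftRight t' :: post)
  | tree (pre : List (STerm S ar)) (t t' : STerm S ar) (post : List (STerm S ar)) :
      STerm.TermMove t t' → ForestMove (pre ++ t :: post) (pre ++ t' :: post)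

/-- The relation `≼`: reflexive and transitive closure of the easterly wind move. -/
def EWLe (f f' : List (STerm S ar)) : Prop := Relation.ReflTransGen ForestMove f f'

/-- Decoration word of a forest. -/
def forestDecs (f : List (STerm S ar)) : List S := (f.map STerm.decs).flatten

/-- Degree (number of internal nodes) of a forest. -/
def forestDeg (f : List (STerm S ar)) : ℕ := (f.map STerm.degree).sum

/-- Preorder indices (from 0) of the roots of the trees of a forest. -/
def rootIdxs : List (STerm S ar) → List ℕ
  | [] => []
  | t :: r => 0 :: (rootIdxs r).map (· + t.degree)

/-- Edges between internal nodes of a forest, numbered in preorder from 0. -/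
def forestEdges : List (STerm S ar) → List (ℕ × ℕ × ℕ)
  | [] => []
  | t :: r => t.edges ++ (forestEdges r).map fun e => (e.1 + t.degree, e.2.1, e.2.2 + t.degree)

/-- Grafting the terms of `l` onto the successive extremal leaves of `t`. -/
def underSub (t : STerm S ar) (l : List (STerm S ar)) : STerm S ar :=
  t.graftList (List.ofFn (n := t.arity) fun p =>
    if (p : ℕ) < t.arity - t.extremalCount then STerm.leaf
    else l.getD ((p : ℕ) - (t.arity - t.extremalCount)) STerm.leaf)

/-- The under product `f' △ f''` of two forests. -/
def underP (f' f'' : List (STerm S ar)) : List (STerm S ar) :=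
  match f'.getLast? with
  | none => f''
  | some t => f'.dropLast ++ underSub t (f''.take t.extremalCount) :: f''.drop t.extremalCount

/-- The term `ι g` of degree 1 whose root is decorated by `g`. -/
def iotaT (g : S) : STerm S ar := STerm.node g fun _ => STerm.leaf

/-- The minimal forest of the interval `W(w)`. -/
def fmin (w : List S) : List (STerm S ar) := w.map iotaT

/-- The maximal forest of the interval `W(w)`: `ι g₁ ∘₁ ι g₂ ∘₁ ⋯ ∘₁ ι g_ℓ`. -/
def fmax : List S → List (STerm S ar)
  | [] => []
  | g :: gs => [(gs.map iotaT).foldl STerm.graftFirst (iotaT g)]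

end Forest
section Alphabet

variable {S : Type} {ar : S → ℕ}

/-- An `S`-forest-like alphabet: a type endowed with a root relation, decoration relations,
and edge relations. -/
structure ForestAlphabet (S : Type) (A : Type) where
  Root : A → Prop
  Dec : S → A → Prop
  Edge : ℕ → A → A → Prop

/-- `f`-compatibility `w ⊩^A f` of a word `w` over a forest-like alphabet. -/
def ForestAlphabet.Compat {A : Type} (Al : ForestAlphabet S A) (w : List A)
    (f : List (STerm S ar)) : Prop :=
  w.length = forestDeg f ∧
  (∀ (i : ℕ) (hi : i < w.length), i ∈ rootIdxs f → Al.Root (w.get ⟨i, hi⟩)) ∧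
  (∀ (i : ℕ) (hi : i < w.length) (hd : i < (forestDecs f).length),
      Al.Dec ((forestDecs f).get ⟨i, hd⟩) (w.get ⟨i, hi⟩)) ∧
  (∀ p j q, (p, j, q) ∈ forestEdges f → ∀ (hp : p < w.length) (hq : q < w.length),
      Al.Edge j (w.get ⟨p, hp⟩) (w.get ⟨q, hq⟩))

/-- The disjoint sum of two forest-like alphabets. -/
def ForestAlphabet.dsum {A B : Type} (Al : ForestAlphabet S A) (Bl : ForestAlphabet S B) :
    ForestAlphabet S (A ⊕ B) where
  Root := Sum.elim Al.Root Bl.Root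
  Dec g := Sum.elim (Al.Dec g) (Bl.Dec g)
  Edge j x y :=
    match x, y with
    | Sum.inl a, Sum.inl a' => Al.Edge j a a'
    | Sum.inr b, Sum.inr b' => Bl.Edge j b b'
    | Sum.inl _, Sum.inr b => Bl.Root b
    | Sum.inr _, Sum.inl _ => False

/-- The alphabet `𝔸_S` with letters `a_{g,u}`, `g ∈ S`, `u ∈ ℕ*`. -/
def ASAlphabet (S : Type) : ForestAlphabet S (S × List ℕ) where
  Root a := ∃ ℓ, a.2 = List.replicate ℓ 0
  Dec g a := a.1 = g
  Edge j a a' := ∃ ℓ, a'.2 = a.2 ++ j :: List.replicate ℓ 0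

/-- The alphabet `A_ℕ` with letters `a_i`, `i ∈ ℕ`, where every letter is a root, every letter
has every decoration, and `a_i →_j a_{i'}` iff `i < i'`. -/
def ANAlphabet (S : Type) : ForestAlphabet S ℕ where
  Root _ := True
  Dec _ _ := True
  Edge _ i i' := i < i'

/-- The packing of a word of natural numbers. -/
def pck (w : List ℕ) : List ℕ :=
  w.map fun m => ((w.filter (· ≤ m)).dedup).length

end Alphabet
section Algebra

open scoped TensorProduct

variable {S : Type} {ar : S → ℕ}

/-- Reduced `S`-terms. -/
abbrev RTerm (S : Type) (ar : S → ℕ) := {t : STerm S ar // t ≠ STerm.leaf}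

/-- The map `rd` keeping the non-leaf entries of a sequence of terms. -/
def rdF : List (STerm S ar) → List (RTerm S ar)
  | [] => []
  | STerm.leaf :: r => rdF r
  | STerm.node g c :: r => ⟨STerm.node g c, fun h => nomatch h⟩ :: rdF r

/-- The natural Hopf algebra `N(S)` as a module: the monoid algebra of the free monoid on the
set of reduced `S`-terms. -/
abbrev NAlg (𝕂 : Type) [CommSemiring 𝕂] (S : Type) (ar : S → ℕ) :=
  MonoidAlgebra 𝕂 (FreeMonoid (RTerm S ar))

/-- The basis element `E_f` of `N(S)` indexed by a reduced forest `f`. -/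
noncomputable def EBasis (𝕂 : Type) [CommSemiring 𝕂] {S : Type} {ar : S → ℕ}
    (f : List (RTerm S ar)) : NAlg 𝕂 S ar :=
  MonoidAlgebra.of 𝕂 (FreeMonoid (RTerm S ar)) (FreeMonoid.ofList f)

/-- The coproduct `Δ` of `N(S)`, defined linearly on the basis by
`Δ E_f = Σ E_{rd(s₁…s_k)} ⊗ E_{rd(u₁…u_k)}`, the sum ranging over all factorizations
`t_m = s_m⟨ū_m⟩` of the entries of `f`. -/
noncomputable def DeltaN (𝕂 : Type) [CommSemiring 𝕂] (S : Type) (ar : S → ℕ) :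
    NAlg 𝕂 S ar →ₗ[𝕂] (NAlg 𝕂 S ar) ⊗[𝕂] (NAlg 𝕂 S ar) :=
  (Finsupp.lift ((NAlg 𝕂 S ar) ⊗[𝕂] (NAlg 𝕂 S ar)) 𝕂 (FreeMonoid (RTerm S ar)) fun m =>
    ∑ᶠ c ∈ {c : List (STerm S ar × List (STerm S ar)) |
        List.Forall₂ (fun p t => p.2.length = p.1.arity ∧ p.1.graftList p.2 = t.val) c
          (FreeMonoid.toList m)},
      (EBasis 𝕂 (rdF (c.map Prod.fst))) ⊗ₜ[𝕂] (EBasis 𝕂 (rdF (c.flatMap Prod.snd)))) ∘ₗ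
    (MonoidAlgebra.coeffLinearEquiv 𝕂).toLinearMap

end Algebra

/-- Number of leaf letters of a word. -/
def ewN {α : Type} : List (Option α) → ℕ
  | [] => 0
  | none :: r => ewN r + 1
  | some _ :: r => ewN r

/-- Number of node letters of a word. -/
def ewD {α : Type} : List (Option α) → ℕ
  | [] => 0
  | none :: r => ewD r
  | some _ :: r => ewD r + 1

/-- Number of pairs (leaf letter, later node letter) of a word. -/
def ewM {α : Type} : List (Option α) → ℕ
  | [] => 0
  | none :: r => ewM r + ewD r
  | some _ :: r => ewM r

theorem ewN_append {α : Type} (a b : List (Option α)) : ewN (a ++ b) = ewN a + ewN b := by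
  induction a with
  | nil => simp [ewN]
  | cons x r ih => cases x <;> simp [ewN, ih] <;> omega

theorem ewD_append {α : Type} (a b : List (Option α)) : ewD (a ++ b) = ewD a + ewD b := by
  induction a with
  | nil => simp [ewD]
  | cons x r ih => cases x <;> simp [ewD, ih] <;> omega

theorem ewM_append {α : Type} (a b : List (Option α)) :
    ewM (a ++ b) = ewM a + ewM b + ewN a * ewD b := by
  induction a with
  | nil => simp [ewM, ewN]
  | cons x r ih =>
    cases x
    · simp [ewM, ewN, ih, ewD_append]; ring
    · simp [ewM, ewN, ih]

theorem ew_ofFn_update {α : Type} : ∀ (n : ℕ) (f : Fin n → List α) (i : Fin n),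
    ∃ pre post, ∀ x, (List.ofFn (Function.update f i x)).flatten = pre ++ (x ++ post) := by
  intro n
  induction n with
  | zero => intro f i; exact i.elim0
  | succ n ih =>
    intro f i
    refine Fin.cases ?_ (fun k => ?_) i
    · refine ⟨[], (List.ofFn fun k => f (Fin.succ k)).flatten, fun x => ?_⟩
      simp [List.ofFn_succ]
    · obtain ⟨pre, post, h⟩ := ih (fun k => f k.succ) k
      refine ⟨f 0 ++ pre, post, fun x => ?_⟩
      have e : (fun m : Fin n => Function.update f k.succ x m.succ)
          = Function.update (fun k => f k.succ) k x := by
        funext m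
        by_cases hm : m = k <;> simp [Function.update_apply, hm]
      rw [List.ofFn_succ, e, List.flatten_cons, h]
      simp [Function.update_apply, (Fin.succ_ne_zero k).symm]

theorem ew_ofFn_update2 {α : Type} : ∀ (n : ℕ) (f : Fin n → List α) (i j : Fin n),
    (j : ℕ) = (i : ℕ) + 1 →
    ∃ pre post, ∀ x y, (List.ofFn (Function.update (Function.update f i x) j y)).flatten
      = pre ++ (x ++ (y ++ post)) := by
  intro n
  induction n with
  | zero => intro f i; exact i.elim0
  | succ n ih =>
    intro f i j hij
    obtain ⟨l, rfl⟩ : ∃ l : Fin n, j = l.succ := by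
      refine ⟨⟨i, by omega⟩, ?_⟩
      ext; simp [hij]
    have e (F : Fin (n+1) → List α) (k : Fin n) (x) :
        (fun m : Fin n => Function.update F k.succ x m.succ)
          = Function.update (fun k => F k.succ) k x := by
      funext m
      by_cases hm : m = k <;> simp [Function.update_apply, hm]
    revert hij
    refine Fin.cases ?_ (fun k => ?_) i
    · intro hij
      obtain ⟨n, rfl⟩ : ∃ n', n = n' + 1 := ⟨n - 1, by have := l.2; omega⟩
      have hl : l = 0 := by ext; simpa using hij
      subst hl
      refine ⟨[], (List.ofFn fun k : Fin n => f k.succ.succ).flatten, fun x y => ?_⟩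
      rw [List.ofFn_succ, e, List.ofFn_succ, Function.update_of_ne (Fin.succ_ne_zero 0).symm]
      simp
    · intro hij
      obtain ⟨pre, post, h⟩ := ih (fun k => f k.succ) k l (by simpa using hij)
      refine ⟨f 0 ++ pre, post, fun x y => ?_⟩
      rw [List.ofFn_succ, e, e, List.flatten_cons, h]
      simp [Function.update_apply, (Fin.succ_ne_zero _).symm]

theorem ew_preo_graft {S : Type} {ar : S → ℕ} (hpos : ∀ g : S, 0 < ar g) (t : STerm S ar) :
    ∃ u, t.preo = u ++ [none] ∧ ∀ s : STerm S ar, (t.graftRight s).preo = u ++ s.preo := by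
  induction t with
  | leaf => exact ⟨[], by simp [STerm.preo], fun s => by simp [STerm.graftRight]⟩
  | node g c ih =>
    have hg := hpos g
    let i : Fin (ar g) := ⟨ar g - 1, by omega⟩
    obtain ⟨u, hu, hs⟩ := ih i
    have key : ∃ pre, ∀ x,
        (List.ofFn (Function.update (fun k => (c k).preo) i x)).flatten = pre ++ x := by
      have gen : ∀ (n : ℕ) (f : Fin n → List (Option S)) (i : Fin n), (i : ℕ) + 1 = n →
          ∃ pre, ∀ x, (List.ofFn (Function.update f i x)).flatten = pre ++ x := by
        intro n f i hi
        obtain ⟨m, rfl⟩ : ∃ m, n = m + 1 := ⟨i, hi.symm⟩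
        have hl : i = Fin.last _ := by ext; simp; omega
        refine ⟨(List.ofFn fun k : Fin m => f k.castSucc).flatten, fun x => ?_⟩
        rw [List.ofFn_succ_last, hl]
        simp [Function.update_apply, Fin.ext_iff, (Fin.is_lt _).ne]
      exact gen _ _ i (by simp [i]; omega)
    obtain ⟨pre, hp⟩ := key
    refine ⟨some g :: (pre ++ u), ?_, fun s => ?_⟩
    · have := hp (c i).preo
      rw [Function.update_eq_self i (fun k => (c k).preo)] at this
      simp [STerm.preo, this, hu]
    · have := hp (u ++ s.preo)
      have e : (fun k : Fin (ar g) => (if (k : ℕ) = ar g - 1 then (c k).graftRight s else c k).preo)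
          = Function.update (fun k => (c k).preo) i (u ++ s.preo) := by
        funext k
        by_cases hk : k = i
        · subst hk; simp [← hs, i]
        · have : (k : ℕ) ≠ ar g - 1 := fun h => hk (Fin.ext h)
          simp [hk, this]
      simp [STerm.graftRight, STerm.preo, e, this]

theorem ewD_pos {S : Type} {ar : S → ℕ} (t : STerm S ar) (h : t ≠ STerm.leaf) :
    0 < ewD t.preo := by
  cases t with
  | leaf => exact absurd rfl h
  | node g c => simp [STerm.preo, ewD]

theorem ew_preo_update {S : Type} {ar : S → ℕ} {n : ℕ} (c : Fin n → STerm S ar) (i : Fin n)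
    (t : STerm S ar) : (fun k => (Function.update c i t k).preo)
      = Function.update (fun k => (c k).preo) i t.preo := by
  funext k
  by_cases hk : k = i
  · subst hk; simp
  · simp [hk]

theorem ew_termMove {S : Type} {ar : S → ℕ} (hpos : ∀ g : S, 0 < ar g) {t t' : STerm S ar}
    (h : STerm.TermMove t t') : ∃ a v b, t.preo = a ++ ([none] ++ (v ++ b)) ∧
      t'.preo = a ++ (v ++ ([none] ++ b)) ∧ 0 < ewD v := by
  induction h with
  | here g c j j' hj hne =>
    obtain ⟨u, hu, hs⟩ := ew_preo_graft hpos (c j)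
    obtain ⟨pre, post, hp⟩ := ew_ofFn_update2 _ (fun k => (c k).preo) j j' hj
    refine ⟨some g :: (pre ++ u), (c j').preo, post, ?_, ?_, ewD_pos _ hne⟩
    · have := hp (c j).preo (c j').preo
      rw [Function.update_eq_self j (fun k => (c k).preo),
        Function.update_eq_self j' (fun k => (c k).preo)] at this
      simp [STerm.preo, this, hu]
    · simp only [STerm.preo]
      rw [ew_preo_update, ew_preo_update, hp, hs]
      simp [STerm.preo]
  | child g c i t' _ ih =>
    obtain ⟨a, v, b, h1, h2, h3⟩ := ih
    obtain ⟨pre, post, hp⟩ := ew_ofFn_update _ (fun k => (c k).preo) i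
    refine ⟨some g :: (pre ++ a), v, b ++ post, ?_, ?_, h3⟩
    · have := hp (c i).preo
      rw [Function.update_eq_self i (fun k => (c k).preo)] at this
      simp [STerm.preo, this, h1]
    · simp only [STerm.preo]
      rw [ew_preo_update, hp, h2]
      simp

theorem ew_forestMove {S : Type} {ar : S → ℕ} (hpos : ∀ g : S, 0 < ar g)
    {f f' : List (STerm S ar)} (h : ForestMove f f') :
    ewM (f'.map STerm.preo).flatten < ewM (f.map STerm.preo).flatten := by
  cases h with
  | root pre t t' post hne =>
    obtain ⟨u, hu, hs⟩ := ew_preo_graft hpos t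
    have := ewD_pos _ hne
    simp only [List.map_append, List.map_cons, List.flatten_append, List.flatten_cons, hu, hs,
      ewM_append, ewD_append, ewN_append, ewM, ewD, ewN]
    nlinarith
  | tree pre t t' post hm =>
    obtain ⟨a, v, b, h1, h2, h3⟩ := ew_termMove hpos hm
    simp only [List.map_append, List.map_cons, List.flatten_append, List.flatten_cons, h1, h2,
      ewM_append, ewD_append, ewN_append, ewM, ewD, ewN]
    nlinarith

theorem ew_le {S : Type} {ar : S → ℕ} (hpos : ∀ g : S, 0 < ar g)
    {f f' : List (STerm S ar)} (h : EWLe f f') : f = f' ∨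
    ewM (f'.map STerm.preo).flatten < ewM (f.map STerm.preo).flatten := by
  induction h with
  | refl => exact Or.inl rfl
  | tail _ hm ih =>
    right
    have := ew_forestMove hpos hm
    rcases ih with rfl | ih
    · exact this
    · exact this.trans ih

/-- for a positive signature, the reflexive-transitive closure `≼` of the
easterly wind relation on reduced `S`-forests is a partial order (reflexive, transitive,
and in particular antisymmetric). -/
theorem easterly_wind_partialOrder {S : Type} {ar : S → ℕ} (hpos : ∀ g : S, 0 < ar g) :
    (∀ f : List (STerm S ar), IsReducedF f → EWLe f f) ∧
    (∀ f g h : List (STerm S ar), IsReducedF f → IsReducedF g → IsReducedF h →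
      EWLe f g → EWLe g h → EWLe f h) ∧
    (∀ f g : List (STerm S ar), IsReducedF f → IsReducedF g →
      EWLe f g → EWLe g f → f = g) := by
  refine ⟨fun f _ => Relation.ReflTransGen.refl, fun f g h _ _ _ h1 h2 => h1.trans h2,
    fun f g _ _ h1 h2 => ?_⟩
  rcases ew_le hpos h1 with h | h
  · exact h
  rcases ew_le hpos h2 with h' | h'
  · exact h'.symm
  · omega
end

section
/- Let S be a positive signature. The easterly wind relation ⇀ is the covering relation of the partial order ≼ on reduced S-forests: for reduced S-forests f and f', one has f ⇀ f' if and only if f ≼ f', f ≠ f', and there is no reduced S-forest g with f ≼ g ≼ f', g ≠ f, g ≠ f'. -/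
open scoped BigOperators

namespace EW

open STerm

variable {S : Type} {ar : S → ℕ}

/-- Number of leaves in a preorder word. -/
def lv : List (Option S) → ℕ
  | [] => 0
  | none :: l => lv l + 1
  | some _ :: l => lv l

/-- Number of internal nodes in a preorder word. -/
def nd : List (Option S) → ℕ
  | [] => 0
  | none :: l => nd l
  | some _ :: l => nd l + 1

/-- Number of pairs (leaf, later internal node). -/
def iv : List (Option S) → ℕ
  | [] => 0
  | none :: l => iv l + nd l
  | some _ :: l => iv l

theorem lv_append (u v : List (Option S)) : lv (u ++ v) = lv u + lv v := by
  induction u with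
  | nil => simp [lv]
  | cons a u ih => cases a <;> simp [lv, ih]; omega

theorem nd_append (u v : List (Option S)) : nd (u ++ v) = nd u + nd v := by
  induction u with
  | nil => simp [nd]
  | cons a u ih => cases a <;> simp [nd, ih]; omega

theorem iv_append (u v : List (Option S)) : iv (u ++ v) = iv u + iv v + lv u * nd v := by
  induction u with
  | nil => simp [iv, lv]
  | cons a u ih =>
    cases a
    · simp [iv, lv, ih, nd_append]; ring
    · simp [iv, lv, ih]

theorem ofFn_update {α : Type} {n : ℕ} (F : Fin n → α) (i : Fin n) (x : α) :
    List.ofFn (Function.update F i x) = (List.ofFn F).set i x := by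
  apply List.ext_getElem
  · simp
  · intro k h1 h2
    simp only [List.getElem_ofFn, List.getElem_set, Function.update_apply]
    congr 1
    simp [Fin.ext_iff, eq_comm]

theorem flat1 {α : Type} {n : ℕ} (F : Fin n → List α) (i : Fin n) :
    ∃ L R, ((i : ℕ) + 1 = n → R = []) ∧
      ∀ x, (List.ofFn (Function.update F i x)).flatten = L ++ x ++ R := by
  refine ⟨((List.ofFn F).take i).flatten, ((List.ofFn F).drop (i + 1)).flatten, ?_, ?_⟩
  · intro h
    rw [List.drop_of_length_le (by simp [h])]; rfl
  · intro x
    rw [ofFn_update, List.set_eq_take_append_cons_drop, if_pos (by simp)]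
    simp

theorem flat2 {α : Type} {n : ℕ} (F : Fin n → List α) (j j' : Fin n)
    (hj : (j' : ℕ) = (j : ℕ) + 1) :
    ∃ L R, ∀ x y, (List.ofFn (Function.update (Function.update F j x) j' y)).flatten
      = L ++ x ++ y ++ R := by
  refine ⟨((List.ofFn F).take j).flatten, ((List.ofFn F).drop (j + 2)).flatten, ?_⟩
  intro x y
  have h2 := j'.2
  have e : ((List.ofFn F).set j x).set j' y
      = (List.ofFn F).take j ++ x :: y :: (List.ofFn F).drop (j + 2) := by
    apply List.ext_getElem
    · simp; omega
    · intro k h1 h3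
      simp only [List.getElem_set, List.getElem_append, List.getElem_cons, List.length_take,
        List.length_ofFn, List.getElem_take, List.getElem_drop]
      have : min (j : ℕ) n = j := by omega
      grind
  rw [ofFn_update, ofFn_update, e]
  simp

theorem preo_upd {n : ℕ} (c : Fin n → STerm S ar) (i : Fin n) (x : STerm S ar) :
    (fun k => (Function.update c i x k).preo)
      = Function.update (fun k => (c k).preo) i x.preo := by
  funext k
  by_cases h : k = i
  · subst h; simp
  · simp [h]

/-- leaves, nodes, and inversions of a term -/
def L (t : STerm S ar) : ℕ := lv t.preo
def N (t : STerm S ar) : ℕ := nd t.preo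
def I (t : STerm S ar) : ℕ := iv t.preo

theorem N_leaf : N (leaf : STerm S ar) = 0 := rfl
theorem I_leaf : I (leaf : STerm S ar) = 0 := rfl

theorem N_pos {t : STerm S ar} (h : t ≠ leaf) : 0 < N t := by
  cases t with
  | leaf => exact absurd rfl h
  | node g c => simp [N, preo, nd]

theorem graft_preo (hpos : ∀ g : S, 0 < ar g) (t : STerm S ar) :
    ∃ u, t.preo = u ++ [none] ∧ ∀ s, (t.graftRight s).preo = u ++ s.preo := by
  induction t with
  | leaf => exact ⟨[], rfl, fun s => rfl⟩
  | node g c ih =>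
    let m : Fin (ar g) := ⟨ar g - 1, Nat.sub_lt (hpos g) one_pos⟩
    obtain ⟨A, R, hR, hA⟩ := flat1 (fun k => (c k).preo) m
    obtain ⟨u, hu, hs⟩ := ih m
    have hR0 : R = [] := hR (by have := hpos g; simp only [m]; omega)
    subst hR0
    refine ⟨some g :: (A ++ u), ?_, ?_⟩
    · have := hA (c m).preo
      rw [Function.update_eq_self] at this
      simp [preo, this, hu]
    · intro s
      have e : (fun i : Fin (ar g) => if (i : ℕ) = ar g - 1 then (c i).graftRight s else c i)
          = Function.update c m ((c m).graftRight s) := by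
        funext k
        by_cases h : k = m
        · subst h; simp [m]
        · have : ¬ (k : ℕ) = ar g - 1 := fun h' => h (Fin.ext h')
          simp [h, this]
      rw [graftRight, e, preo, preo_upd, hA, hs]
      simp

theorem N_graft (hpos : ∀ g : S, 0 < ar g) (t s : STerm S ar) :
    N (t.graftRight s) = N t + N s := by
  obtain ⟨u, h1, h2⟩ := graft_preo hpos t
  simp [N, h1, h2, nd_append, nd]

theorem I_graft (hpos : ∀ g : S, 0 < ar g) (t s : STerm S ar) :
    I (t.graftRight s) = I t + I s + (L t - 1) * N s := by
  obtain ⟨u, h1, h2⟩ := graft_preo hpos t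
  simp [N, I, L, h1, h2, nd, iv_append, iv, lv, lv_append]

theorem move_stats (hpos : ∀ g : S, 0 < ar g) {t t' : STerm S ar} (h : TermMove t t') :
    L t' = L t ∧ N t' = N t ∧ I t' < I t := by
  induction h with
  | here g c j j' hj hne =>
    obtain ⟨A, R, hA⟩ := flat2 (fun k => (c k).preo) j j' hj
    obtain ⟨u, h1, h2⟩ := graft_preo hpos (c j)
    have e0 := hA (c j).preo (c j').preo
    rw [Function.update_eq_self, Function.update_eq_self] at e0
    have hN := N_pos hne
    simp only [L, N, I, preo, preo_upd, hA, e0, h1, h2] at hN ⊢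
    simp [lv, nd, iv, lv_append, nd_append, iv_append]
    omega
  | child g c i t' hm ih =>
    obtain ⟨A, R, -, hA⟩ := flat1 (fun k => (c k).preo) i
    have e0 := hA (c i).preo
    rw [Function.update_eq_self] at e0
    obtain ⟨i1, i2, i3⟩ := ih
    simp only [L, N, I, preo, preo_upd, hA, e0] at i1 i2 i3 ⊢
    simp [lv, nd, iv, lv_append, nd_append, iv_append, i1, i2, i3]

abbrev TLe : STerm S ar → STerm S ar → Prop := Relation.ReflTransGen TermMove

theorem le_I (hpos : ∀ g : S, 0 < ar g) {t t' : STerm S ar} (h : TLe t t') : I t' ≤ I t := by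
  induction h with
  | refl => exact le_rfl
  | tail _ h ih => exact (move_stats hpos h).2.2.le.trans ih

def CHere {n : ℕ} (j j' : Fin n) (c c' : Fin n → STerm S ar) : Prop :=
  (j' : ℕ) = (j : ℕ) + 1 ∧ c j' ≠ leaf ∧
    c' = Function.update (Function.update c j ((c j).graftRight (c j'))) j' leaf

def CChild {n : ℕ} (i : Fin n) (c c' : Fin n → STerm S ar) : Prop :=
  ∃ t', TermMove (c i) t' ∧ c' = Function.update c i t'

def CMove {n : ℕ} (c c' : Fin n → STerm S ar) : Prop :=
  (∃ j j', CHere j j' c c') ∨ ∃ i, CChild i c c'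

theorem move_inv {g : S} {c : Fin (ar g) → STerm S ar} {s : STerm S ar}
    (h : TermMove (node g c) s) : ∃ c', s = node g c' ∧ CMove c c' := by
  cases h with
  | here _ _ j j' hj hne => exact ⟨_, rfl, Or.inl ⟨j, j', hj, hne, rfl⟩⟩
  | child _ _ i t' hm => exact ⟨_, rfl, Or.inr ⟨i, t', hm, rfl⟩⟩

theorem path_inv {g : S} {c e : Fin (ar g) → STerm S ar}
    (h : TLe (node g c) (node g e)) : Relation.ReflTransGen CMove c e := by
  generalize hx : node g c = x at h
  induction h using Relation.ReflTransGen.head_induction_on generalizing c with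
  | refl => cases hx; exact .refl
  | head h _ ih =>
    subst hx
    obtain ⟨c', rfl, hc⟩ := move_inv h
    exact .head hc (ih rfl)

/-- partial sums of degrees -/
def D {n : ℕ} (c : Fin n → STerm S ar) (k : Fin n) : ℕ :=
  ∑ i, if i ≤ k then N (c i) else 0

theorem D_congr {n : ℕ} {c c' : Fin n → STerm S ar} (h : ∀ i, N (c' i) = N (c i)) (k : Fin n) :
    D c' k = D c k := by simp [D, h]

theorem N_child (hpos : ∀ g : S, 0 < ar g) {n : ℕ} {i : Fin n} {c c' : Fin n → STerm S ar}
    (h : CChild i c c') (k : Fin n) : N (c' k) = N (c k) := by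
  obtain ⟨t', hm, rfl⟩ := h
  by_cases hk : k = i
  · subst hk; simp [(move_stats hpos hm).2.1]
  · simp [hk]

theorem sum_two {n : ℕ} (j j' : Fin n) (h : j ≠ j') (F : Fin n → ℕ) :
    ∑ i, F i = F j + F j' + ∑ i ∈ (Finset.univ.erase j).erase j', F i := by
  rw [← Finset.add_sum_erase _ F (Finset.mem_univ j),
    ← Finset.add_sum_erase (Finset.univ.erase j) F (a := j') (by simp [h.symm])]
  ring

theorem D_here (hpos : ∀ g : S, 0 < ar g) {n : ℕ} {j j' : Fin n} {c c' : Fin n → STerm S ar}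
    (h : CHere j j' c c') (k : Fin n) :
    D c' k = D c k + if k = j then N (c j') else 0 := by
  obtain ⟨hj, hne, rfl⟩ := h
  have hjj : j ≠ j' := by intro h; subst h; omega
  unfold D
  rw [sum_two j j' hjj, sum_two j j' hjj]
  have : ∑ i ∈ (Finset.univ.erase j).erase j', (if i ≤ k then N (Function.update
      (Function.update c j ((c j).graftRight (c j'))) j' leaf i) else 0)
      = ∑ i ∈ (Finset.univ.erase j).erase j', (if i ≤ k then N (c i) else 0) := by
    apply Finset.sum_congr rfl
    intro i hi
    simp only [Finset.mem_erase] at hi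
    simp [hi.1, hi.2.1]
  rw [this]
  simp only [Function.update_self, ne_eq, hjj, not_false_eq_true, Function.update_of_ne,
    N_graft hpos, N_leaf, Fin.le_def, Fin.ext_iff]
  split_ifs <;> omega

theorem D_move (hpos : ∀ g : S, 0 < ar g) {n : ℕ} {c c' : Fin n → STerm S ar}
    (h : CMove c c') (k : Fin n) : D c k ≤ D c' k := by
  rcases h with ⟨j, j', h⟩ | ⟨i, h⟩
  · rw [D_here hpos h]; omega
  · rw [D_congr (N_child hpos h)]

theorem D_path (hpos : ∀ g : S, 0 < ar g) {n : ℕ} {c c' : Fin n → STerm S ar}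
    (h : Relation.ReflTransGen CMove c c') (k : Fin n) : D c k ≤ D c' k := by
  induction h with
  | refl => exact le_rfl
  | tail _ h ih => exact ih.trans (D_move hpos h k)

theorem path_comp (hpos : ∀ g : S, 0 < ar g) {n : ℕ} {c e : Fin n → STerm S ar}
    (h : Relation.ReflTransGen CMove c e) (hD : ∀ k, D c k = D e k) (k : Fin n) :
    TLe (c k) (e k) := by
  induction h using Relation.ReflTransGen.head_induction_on with
  | refl => exact .refl
  | @head c d hm hp ih =>
    have hd : ∀ k, D d k = D e k := fun k =>
      le_antisymm (D_path hpos hp k) (hD k ▸ D_move hpos hm k)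
    refine Relation.ReflTransGen.trans ?_ (ih hd)
    rcases hm with ⟨j, j', h⟩ | ⟨i, t', hm, rfl⟩
    · exfalso
      have h1 := D_here hpos h j
      have h2 := N_pos h.2.1
      rw [hd, hD] at h1
      simp at h1; omega
    · by_cases hk : k = i
      · subst hk; simpa using .single hm
      · simpa [hk] using .refl

def phi {n : ℕ} (j j' : Fin n) (c : Fin n → STerm S ar) : ℕ :=
  I (c j) + I (c j') + (L (c j) - 1) * N (c j')

theorem phi_here (hpos : ∀ g : S, 0 < ar g) {n : ℕ} {j j' : Fin n} {c c' : Fin n → STerm S ar}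
    (h : CHere j j' c c') :
    phi j j' c' = phi j j' c ∧ ∀ k, k ≠ j → k ≠ j' → c' k = c k := by
  obtain ⟨hj, hne, rfl⟩ := h
  have hjj : j ≠ j' := by intro h; subst h; omega
  refine ⟨?_, fun k h1 h2 => by simp [h1, h2]⟩
  simp [phi, hjj, I_graft hpos, N_leaf, I_leaf]

theorem phi_child (hpos : ∀ g : S, 0 < ar g) {n : ℕ} {j j' i : Fin n} (hjj : j ≠ j')
    {c c' : Fin n → STerm S ar} (h : CChild i c c') :
    phi j j' c' ≤ phi j j' c ∧ (i = j ∨ i = j' → phi j j' c' < phi j j' c) ∧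
      (∀ k, I (c' k) ≤ I (c k)) ∧ I (c' i) < I (c i) := by
  obtain ⟨t', hm, rfl⟩ := h
  obtain ⟨h1, h2, h3⟩ := move_stats hpos hm
  have key : (i = j ∨ i = j' → phi j j' (Function.update c i t') < phi j j' c) := by
    rintro (rfl | rfl)
    · simp [phi, hjj.symm, h1]; omega
    · simp [phi, hjj, h2]; omega
  refine ⟨?_, key, ?_, by simpa using h3⟩
  · by_cases h : i = j ∨ i = j'
    · exact (key h).le
    · push Not at h
      simp [phi, h.1.symm, h.2.symm]
  · intro k
    by_cases hk : k = i
    · subst hk; simpa using h3.le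
    · simp [hk]

theorem path_phi (hpos : ∀ g : S, 0 < ar g) {n : ℕ} {c e : Fin n → STerm S ar} {j j' : Fin n}
    (hj : (j' : ℕ) = (j : ℕ) + 1)
    (h : Relation.ReflTransGen CMove c e) (hD : ∀ k, k ≠ j → D c k = D e k) :
    phi j j' e ≤ phi j j' c ∧ ∀ k, k ≠ j → k ≠ j' → I (e k) ≤ I (c k) := by
  have hjj : j ≠ j' := by intro h; subst h; omega
  induction h using Relation.ReflTransGen.head_induction_on with
  | refl => exact ⟨le_rfl, fun _ _ _ => le_rfl⟩
  | @head c d hm hp ih =>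
    have hd : ∀ k, k ≠ j → D d k = D e k := fun k hk =>
      le_antisymm (D_path hpos hp k) (hD k hk ▸ D_move hpos hm k)
    obtain ⟨a, b⟩ := ih hd
    rcases hm with ⟨p, p', h⟩ | ⟨i, h⟩
    · by_cases hpj : p = j
      · subst hpj
        have : p' = j' := Fin.ext (by rw [h.1, hj])
        subst this
        obtain ⟨h1, h2⟩ := phi_here hpos h
        exact ⟨h1 ▸ a, fun k k1 k2 => h2 k k1 k2 ▸ b k k1 k2⟩
      · exfalso
        have h1 := D_here hpos h p
        have h2 := N_pos h.2.1
        rw [hd p hpj, hD p hpj] at h1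
        simp at h1; omega
    · obtain ⟨h1, -, h2, -⟩ := phi_child hpos hjj h
      exact ⟨a.trans h1, fun k k1 k2 => (b k k1 k2).trans (h2 k)⟩

theorem term_cover (hpos : ∀ g : S, 0 < ar g) {t t' s : STerm S ar} (h : TermMove t t')
    (hs : TermMove t s) (hle : TLe s t') : s = t' := by
  induction h generalizing s with
  | here g c j j' hj hne =>
    obtain ⟨d, rfl, hd⟩ := move_inv hs
    have hp := path_inv hle
    have hh : CHere j j' c _ := ⟨hj, hne, rfl⟩
    have hjj : j ≠ j' := by intro h; subst h; omega
    have hDe := D_here hpos hh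
    rcases hd with ⟨p, p', h⟩ | ⟨i, h⟩
    · have h1 := D_here hpos h p
      have h2 := N_pos h.2.1
      have h3 := D_path hpos hp p
      rw [hDe, h1] at h3
      have hpj : p = j := by
        by_contra hpj
        simp [hpj] at h3; omega
      subst hpj
      have : p' = j' := Fin.ext (by rw [h.1, hj])
      subst this
      rw [h.2.2]
    · exfalso
      have hD : ∀ k, k ≠ j → D d k = D _ k := fun k hk => by
        rw [hDe k, if_neg hk, D_congr (N_child hpos h)]; rfl
      obtain ⟨a, b⟩ := path_phi hpos hj hp hD
      obtain ⟨e1, e2⟩ := phi_here hpos hh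
      obtain ⟨-, f2, -, f4⟩ := phi_child hpos hjj h
      by_cases hi : i = j ∨ i = j'
      · have := f2 hi; omega
      · push Not at hi
        have := b i hi.1 hi.2
        rw [e2 i hi.1 hi.2] at this
        omega
  | child g c i t' hm ih =>
    obtain ⟨d, rfl, hd⟩ := move_inv hs
    have hp := path_inv hle
    have hN := N_child hpos (i := i) (c := c) ⟨t', hm, rfl⟩
    rcases hd with ⟨p, p', h⟩ | ⟨k, s', hk, rfl⟩
    · exfalso
      have h1 := D_here hpos h p
      have h2 := N_pos h.2.1
      have h3 := D_path hpos hp p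
      rw [D_congr hN, h1] at h3
      simp at h3; omega
    · have hN' := N_child hpos (i := k) (c := c) ⟨s', hk, rfl⟩
      have hc := path_comp hpos hp (fun q => by rw [D_congr hN, D_congr hN']) k
      by_cases hki : k = i
      · subst hki
        rw [Function.update_self, Function.update_self] at hc
        rw [ih hk hc]
      · exfalso
        simp only [Function.update_self, ne_eq, hki, not_false_eq_true,
          Function.update_of_ne] at hc
        have := le_I hpos hc
        have := (move_stats hpos hk).2.2
        omega

/-! Forests -/

def V (f : List (STerm S ar)) : ℕ := (f.map I).sum

def T (f : List (STerm S ar)) : List (ℕ × ℕ) := f.map fun t => (L t, N t)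

/-- the two kinds of moves, by index -/
def FTree (f f' : List (STerm S ar)) : Prop :=
  ∃ pre t t' post, TermMove t t' ∧ f = pre ++ t :: post ∧ f' = pre ++ t' :: post

def FRoot (f f' : List (STerm S ar)) : Prop :=
  ∃ pre t t' post, t' ≠ leaf ∧ f = pre ++ t :: t' :: post ∧ f' = pre ++ t.graftRight t' :: post

theorem fmove_inv {f f' : List (STerm S ar)} (h : ForestMove f f') :
    FTree f f' ∨ FRoot f f' := by
  cases h with
  | root pre t t' post h => exact .inr ⟨_, _, _, _, h, rfl, rfl⟩
  | tree pre t t' post h => exact .inl ⟨_, _, _, _, h, rfl, rfl⟩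

theorem FTree.stats (hpos : ∀ g : S, 0 < ar g) {f f' : List (STerm S ar)} (h : FTree f f') :
    T f' = T f ∧ V f' < V f ∧ f'.length = f.length := by
  obtain ⟨pre, t, t', post, hm, rfl, rfl⟩ := h
  obtain ⟨h1, h2, h3⟩ := move_stats hpos hm
  simp [T, V, h1, h2, h3]

theorem FRoot.len {f f' : List (STerm S ar)} (h : FRoot f f') :
    f.length = f'.length + 1 := by
  obtain ⟨pre, t, t', post, hm, rfl, rfl⟩ := h
  simp; omega

theorem len_path (hpos : ∀ g : S, 0 < ar g) {f f' : List (STerm S ar)} (h : EWLe f f') :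
    f'.length ≤ f.length := by
  induction h with
  | refl => exact le_rfl
  | tail _ h ih =>
    rcases fmove_inv h with h | h
    · rw [(h.stats hpos).2.2]; exact ih
    · have := h.len; omega

theorem path_eqlen (hpos : ∀ g : S, 0 < ar g) {f f' : List (STerm S ar)} (h : EWLe f f')
    (hl : f.length = f'.length) : T f = T f' ∧ V f' ≤ V f ∧ List.Forall₂ TLe f f' := by
  induction h using Relation.ReflTransGen.head_induction_on with
  | refl => exact ⟨rfl, le_rfl, List.forall₂_same.2 fun _ _ => .refl⟩
  | head hm hp ih =>
    have hlen := len_path hpos hp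
    rcases fmove_inv hm with h | h
    · obtain ⟨a, b, c⟩ := h.stats hpos
      obtain ⟨i1, i2, i3⟩ := ih (by omega)
      refine ⟨a ▸ i1, by omega, ?_⟩
      obtain ⟨pre, t, t', post, hmm, rfl, rfl⟩ := h
      have : List.Forall₂ TLe (pre ++ t :: post) (pre ++ t' :: post) :=
        List.rel_append (List.forall₂_same.2 fun _ _ => .refl)
          (.cons (.single hmm) (List.forall₂_same.2 fun _ _ => .refl))
      rw [List.forall₂_iff_get] at this i3 ⊢
      refine ⟨by omega, fun k h1 h2 => (this.2 k h1 (by omega)).trans (i3.2 k _ h2)⟩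
    · have := h.len; omega

theorem no_cycle (hpos : ∀ g : S, 0 < ar g) {f g : List (STerm S ar)} (h : ForestMove f g)
    (h' : EWLe g f) : False := by
  have := len_path hpos h'
  rcases fmove_inv h with h | h
  · obtain ⟨-, b, c⟩ := h.stats hpos
    have := (path_eqlen hpos h' c).2.1
    omega
  · have := h.len; omega

theorem move_reduced (hpos : ∀ g : S, 0 < ar g) {f f' : List (STerm S ar)} (h : ForestMove f f')
    (hf : IsReducedF f) : IsReducedF f' := by
  have key : ∀ s : STerm S ar, 0 < N s → s ≠ leaf := by
    rintro s hs rfl; simp [N_leaf] at hs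
  cases h with
  | root pre t t' post h =>
    intro s hs
    simp only [List.mem_append, List.mem_cons] at hs
    rcases hs with hs | rfl | hs
    · exact hf s (by simp [hs])
    · apply key; rw [N_graft hpos]; have := N_pos h; omega
    · exact hf s (by simp [hs])
  | tree pre t t' post h =>
    intro s hs
    simp only [List.mem_append, List.mem_cons] at hs
    rcases hs with hs | rfl | hs
    · exact hf s (by simp [hs])
    · apply key; rw [(move_stats hpos h).2.1]; exact N_pos (hf t (by simp))
    · exact hf s (by simp [hs])

/-- The merging position is determined by the degrees. -/
theorem merge_pos_aux {p p2 q q2 : List ℕ} {a b a2 b2 : ℕ} (hb : 0 < b)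
    (h : p ++ a :: b :: q = p2 ++ a2 :: b2 :: q2)
    (h' : p ++ (a + b) :: q = p2 ++ (a2 + b2) :: q2) : p2.length ≤ p.length := by
  by_contra hlt
  push Not at hlt
  have e1 := congrArg (fun l => l[p.length]?) h
  have e2 := congrArg (fun l => l[p.length]?) h'
  simp [List.getElem?_append_left hlt] at e1 e2
  rw [← e1] at e2
  simp at e2; omega

theorem merge_pos {p p2 q q2 : List ℕ} {a b a2 b2 : ℕ} (hb : 0 < b) (hb2 : 0 < b2)
    (h : p ++ a :: b :: q = p2 ++ a2 :: b2 :: q2)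
    (h' : p ++ (a + b) :: q = p2 ++ (a2 + b2) :: q2) : p.length = p2.length :=
  le_antisymm (merge_pos_aux hb2 h.symm h'.symm) (merge_pos_aux hb h h')

theorem T_N {f g : List (STerm S ar)} (h : T f = T g) : f.map N = g.map N := by
  have := congrArg (List.map Prod.snd) h
  simpa [T, Function.comp_def] using this

theorem path_root (hpos : ∀ g : S, 0 < ar g) {pre post : List (STerm S ar)} {t t' : STerm S ar}
    (ht : t' ≠ leaf) {h : List (STerm S ar)}
    (hle : EWLe h (pre ++ t.graftRight t' :: post))
    (hT : T h = T (pre ++ t :: t' :: post)) :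
    V (pre ++ t.graftRight t' :: post) ≤ V h + (L t - 1) * N t' := by
  induction hle using Relation.ReflTransGen.head_induction_on with
  | refl =>
    exfalso
    have := congrArg List.length hT
    simp [T] at this
  | @head h h1 hm hp ih =>
    have hlen := congrArg List.length hT
    simp only [T, List.length_map] at hlen
    rcases fmove_inv hm with hx | hx
    · obtain ⟨a, b, c⟩ := hx.stats hpos
      have := ih (a.trans hT); omega
    · have hl := hx.len
      obtain ⟨b1, b2, -⟩ := path_eqlen hpos hp (by simp at hlen ⊢; omega)
      obtain ⟨pre2, s, s', post2, hs, rfl, rfl⟩ := hx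
      have n1 := T_N hT
      have n2 := T_N b1
      simp only [List.map_append, List.map_cons, N_graft hpos] at n1 n2
      have hpp := merge_pos (N_pos hs) (N_pos ht) n1 n2
      simp only [T, List.map_append, List.map_cons] at hT
      obtain ⟨-, hT2⟩ := List.append_inj hT (by simpa using hpp)
      simp only [List.cons.injEq, Prod.mk.injEq] at hT2
      obtain ⟨⟨l1, -⟩, ⟨-, l2⟩, -⟩ := hT2
      refine b2.trans ?_
      simp [V, I_graft hpos, l1, l2]
      omega

theorem forest_cover (hpos : ∀ g : S, 0 < ar g) {f f' g : List (STerm S ar)}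
    (h : ForestMove f f') (hg : ForestMove f g) (hle : EWLe g f') : g = f' := by
  have hlen := len_path hpos hle
  rcases fmove_inv h with h | h
  · have hs := h.stats hpos
    rcases fmove_inv hg with hg | hg
    · have gs := hg.stats hpos
      obtain ⟨-, -, hF⟩ := path_eqlen hpos hle (by omega)
      rw [List.forall₂_iff_get] at hF
      obtain ⟨pre, t, t', post, hm, rfl, rfl⟩ := h
      obtain ⟨pre2, t2, s, post2, hm2, he, rfl⟩ := hg
      have hk := hF.2 pre2.length (by simp) (by rw [← hF.1]; simp)
      by_cases hpp : pre.length = pre2.length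
      · obtain ⟨rfl, he2⟩ := List.append_inj he hpp
        simp only [List.cons.injEq] at he2
        obtain ⟨rfl, rfl⟩ := he2
        simp at hk
        rw [term_cover hpos hm hm2 hk]
      · exfalso
        have e1 : (pre ++ t' :: post)[pre2.length]? = (pre ++ t :: post)[pre2.length]? := by
          simp only [List.getElem?_append, List.getElem?_cons]
          split_ifs
          · rfl
          · omega
          · rfl
        rw [he] at e1
        simp at e1
        obtain ⟨_, e1⟩ := List.getElem?_eq_some_iff.1 e1
        simp [e1] at hk
        have := le_I hpos hk
        have := (move_stats hpos hm2).2.2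
        omega
    · have := hg.len; omega
  · have hl := h.len
    rcases fmove_inv hg with hg | hg
    · exfalso
      obtain ⟨a, b, c⟩ := hg.stats hpos
      obtain ⟨pre, t, t', post, ht, rfl, rfl⟩ := h
      have := path_root hpos ht hle a
      simp [V, I_graft hpos] at this b
      omega
    · have gl := hg.len
      obtain ⟨b1, -, -⟩ := path_eqlen hpos hle (by omega)
      obtain ⟨pre, t, t', post, ht, rfl, rfl⟩ := h
      obtain ⟨pre2, s, s', post2, hs, he, rfl⟩ := hg
      have n1 := congrArg (List.map N) he
      have n2 := T_N b1
      simp only [List.map_append, List.map_cons, N_graft hpos] at n1 n2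
      have hpp := merge_pos (N_pos ht) (N_pos hs) n1 n2.symm
      obtain ⟨rfl, he2⟩ := List.append_inj he (by simpa using hpp)
      simp only [List.cons.injEq] at he2
      obtain ⟨rfl, rfl, rfl⟩ := he2
      rfl

end EW

/-- the easterly wind relation `⇀` is the covering relation of the partial
order `≼` on reduced `S`-forests. -/
theorem easterly_wind_covering {S : Type} {ar : S → ℕ} (hpos : ∀ g : S, 0 < ar g)
    (f f' : List (STerm S ar)) (hf : IsReducedF f) (hf' : IsReducedF f') :
    ForestMove f f' ↔
      EWLe f f' ∧ f ≠ f' ∧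
        ¬ ∃ g : List (STerm S ar),
            IsReducedF g ∧ EWLe f g ∧ EWLe g f' ∧ g ≠ f ∧ g ≠ f' := by
  constructor
  · intro h
    refine ⟨.single h, ?_, ?_⟩
    · rintro rfl
      exact EW.no_cycle hpos h .refl
    · rintro ⟨g, -, h1, h2, h3, h4⟩
      rcases Relation.ReflTransGen.cases_head h1 with e | ⟨k, hk, hkg⟩
      · exact h3 e.symm
      · have : k = f' := EW.forest_cover hpos h hk (hkg.trans h2)
        subst this
        rcases Relation.ReflTransGen.cases_head hkg with e | ⟨m, hm, hmg⟩
        · exact h4 e.symm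
        · exact EW.no_cycle hpos hm (hmg.trans h2)
  · rintro ⟨h1, h2, h3⟩
    rcases Relation.ReflTransGen.cases_head h1 with e | ⟨k, hk, hkg⟩
    · exact absurd e h2
    · by_cases hkf : k = f'
      · exact hkf ▸ hk
      · exact absurd ⟨k, EW.move_reduced hpos hk hf, .single hk, hkg,
          fun e => EW.no_cycle hpos hk (e ▸ .refl), hkf⟩ h3
end

section
/- Let S be a positive signature and let f, f' be reduced S-forests with f ≼ f'. Then the word of decorations of the internal nodes of f, read along the left-to-right preorder traversal of the trees of f taken from left to right, equals the corresponding decoration word of f'; in particular dg(f) = dg(f') and f and f' have the same number of internal nodes with each decoration. -/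
open scoped BigOperators

theorem ew_flatten_last {α : Type} (s : List α) : ∀ (n : ℕ) (_ : 0 < n) (F : Fin n → List α),
    (List.ofFn fun i : Fin n => if (i : ℕ) = n - 1 then F i ++ s else F i).flatten
      = (List.ofFn F).flatten ++ s := by
  intro n hn F
  obtain ⟨m, rfl⟩ : ∃ m, n = m + 1 := ⟨n - 1, by omega⟩
  have h : ∀ i : Fin m, ((i : ℕ) = m) = False := fun i => by
    have := i.2
    simp; omega
  rw [List.ofFn_succ', List.ofFn_succ']
  simp [h, List.concat_eq_append]

theorem ew_flatten_adj {α : Type} : ∀ (n : ℕ) (F G : Fin n → List α) (j j' : Fin n)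
    (_ : (j' : ℕ) = (j : ℕ) + 1) (_ : F j ++ F j' = G j ++ G j')
    (_ : ∀ i, i ≠ j → i ≠ j' → F i = G i),
    (List.ofFn F).flatten = (List.ofFn G).flatten := by
  intro n
  induction n with
  | zero => intro F G j; exact j.elim0
  | succ n ih =>
    intro F G j j' hj h1 h2
    obtain ⟨k', rfl⟩ : ∃ k', j' = Fin.succ k' :=
      Fin.exists_succ_eq.2 (by intro h; simp [h] at hj) |>.imp fun _ h => h.symm
    induction j using Fin.cases with
    | zero =>
      obtain ⟨m, rfl⟩ : ∃ m, n = m + 1 := ⟨n - 1, by have := k'.2; omega⟩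
      have hk : k' = 0 := by ext; simpa using hj
      subst hk
      have h3 : ∀ i : Fin m, F i.succ.succ = G i.succ.succ := fun i =>
        h2 _ (Fin.succ_ne_zero _) (fun h => Fin.succ_ne_zero _ (Fin.succ_injective _ h))
      simp only [List.ofFn_succ, List.flatten_cons, h3, ← List.append_assoc]
      rw [h1]
    | succ k =>
      simp only [List.ofFn_succ, List.flatten_cons]
      rw [h2 0 (Fin.succ_ne_zero _).symm (Fin.succ_ne_zero _).symm]
      rw [ih (fun i => F i.succ) (fun i => G i.succ) k k' (by simpa using hj) h1
        (fun i a b => h2 _ (fun h => a (Fin.succ_injective _ h))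
          (fun h => b (Fin.succ_injective _ h)))]

theorem ew_decs_length {S : Type} {ar : S → ℕ} (t : STerm S ar) :
    t.decs.length = t.degree := by
  induction t with
  | leaf => simp [STerm.decs, STerm.degree]
  | node g c ih =>
    simp only [STerm.decs, STerm.degree, List.length_cons, List.length_flatten, List.map_ofFn,
      List.sum_ofFn, Function.comp_def, ih]
    omega

theorem ew_decs_graftRight {S : Type} {ar : S → ℕ} (hpos : ∀ g : S, 0 < ar g)
    (t s : STerm S ar) : (t.graftRight s).decs = t.decs ++ s.decs := by
  induction t with
  | leaf => simp [STerm.decs, STerm.graftRight]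
  | node g c ih =>
    simp only [STerm.decs, STerm.graftRight, List.cons_append]
    rw [← ew_flatten_last s.decs (ar g) (hpos g) (fun i => (c i).decs)]
    congr 3
    funext i
    split <;> simp [ih]

theorem ew_decs_move {S : Type} {ar : S → ℕ} (hpos : ∀ g : S, 0 < ar g)
    {t t' : STerm S ar} (h : STerm.TermMove t t') : t.decs = t'.decs := by
  induction h with
  | here g c j j' hj hne =>
    have hjj : j ≠ j' := by rintro rfl; omega
    simp only [STerm.decs]
    congr 1
    apply ew_flatten_adj _ _ _ j j' hj
    · simp [Function.update_of_ne hjj, ew_decs_graftRight hpos, STerm.decs]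
    · intro i a b
      simp [Function.update_of_ne a, Function.update_of_ne b]
  | child g c i t' _ ih =>
    simp only [STerm.decs]
    congr 3
    funext k
    by_cases hk : k = i
    · subst hk; simpa using ih
    · simp [Function.update_of_ne hk]

theorem ew_forest_length {S : Type} {ar : S → ℕ} (f : List (STerm S ar)) :
    forestDeg f = (forestDecs f).length := by
  simp [forestDeg, forestDecs, List.length_flatten, Function.comp_def, ew_decs_length]

theorem ew_forest_move {S : Type} {ar : S → ℕ} (hpos : ∀ g : S, 0 < ar g)
    {f f' : List (STerm S ar)} (h : ForestMove f f') : forestDecs f = forestDecs f' := by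
  cases h with
  | root pre t t' post _ => simp [forestDecs, ew_decs_graftRight hpos]
  | tree pre t t' post h => simp [forestDecs, ew_decs_move hpos h]

/-- the relation `≼` preserves the decoration word of reduced forests (read
in preorder, trees from left to right); in particular it preserves the degree. -/
theorem easterly_wind_preserves_decorations {S : Type} {ar : S → ℕ}
    (hpos : ∀ g : S, 0 < ar g) (f f' : List (STerm S ar))
    (hf : IsReducedF f) (hf' : IsReducedF f') (h : EWLe f f') :
    forestDecs f = forestDecs f' ∧ forestDeg f = forestDeg f' := by
  have key : forestDecs f = forestDecs f' := by
    clear hf hf'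
    induction h with
    | refl => rfl
    | tail _ h ih => exact ih.trans (ew_forest_move hpos h)
  exact ⟨key, by rw [ew_forest_length, ew_forest_length, key]⟩
end

section
/- Let S be a positive signature. For any reduced S-forest f, the set {f' : f ≼ f'} of reduced S-forests greater than or equal to f is finite; in particular, every interval of the partial order ≼ is finite. -/
open scoped BigOperators

namespace STerm

variable {S : Type} {ar : S → ℕ}

/-- The set of decorations of a term. -/
def gset : STerm S ar → Set S
  | leaf => ∅
  | node g c => insert g (⋃ i, (c i).gset)

theorem gset_finite (t : STerm S ar) : t.gset.Finite := by
  induction t with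
  | leaf => simp [gset]
  | node g c ih => exact (Set.finite_iUnion ih).insert g

theorem gset_graftRight (t s : STerm S ar) : (t.graftRight s).gset ⊆ t.gset ∪ s.gset := by
  induction t with
  | leaf => simp [graftRight]
  | node g c ih =>
    intro x hx
    simp only [graftRight, gset, Set.mem_insert_iff, Set.mem_iUnion, Set.mem_union] at hx ⊢
    rcases hx with hx | ⟨i, hi⟩
    · exact Or.inl (Or.inl hx)
    · split_ifs at hi with h
      · rcases ih i hi with h1 | h1
        · exact Or.inl (Or.inr ⟨i, h1⟩)
        · exact Or.inr h1
      · exact Or.inl (Or.inr ⟨i, hi⟩)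

theorem degree_graftRight (t s : STerm S ar) :
    (t.graftRight s).degree ≤ t.degree + s.degree := by
  induction t with
  | leaf => simp [graftRight]
  | node g c ih =>
    simp only [graftRight, degree]
    have key : ∀ i : Fin (ar g),
        (if (i : ℕ) = ar g - 1 then (c i).graftRight s else c i).degree
          ≤ (c i).degree + (if (i : ℕ) = ar g - 1 then s.degree else 0) := by
      intro i
      split_ifs
      · exact ih i
      · simp
    have h1 := Finset.sum_le_sum (fun i (_ : i ∈ Finset.univ) => key i)
    rw [Finset.sum_add_distrib] at h1
    have h2 : (∑ i : Fin (ar g), if (i : ℕ) = ar g - 1 then s.degree else 0) ≤ s.degree := by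
      rw [← Finset.sum_filter, Finset.sum_const, smul_eq_mul]
      have : (Finset.univ.filter fun i : Fin (ar g) => (i : ℕ) = ar g - 1).card ≤ 1 := by
        rw [Finset.card_le_one]
        intro a ha b hb
        simp only [Finset.mem_filter, Finset.mem_univ, true_and] at ha hb
        exact Fin.ext (by omega)
      nlinarith
    omega

theorem sum_two {n : ℕ} (f g : Fin n → ℕ) (a b : Fin n) (hab : a ≠ b)
    (ho : ∀ i, i ≠ a → i ≠ b → g i = f i) (h : g a + g b ≤ f a + f b) :
    ∑ i, g i ≤ ∑ i, f i := by
  have hb : b ∈ Finset.univ.erase a := by simp [hab.symm]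
  rw [← Finset.add_sum_erase _ g (Finset.mem_univ a), ← Finset.add_sum_erase _ f (Finset.mem_univ a),
    ← Finset.add_sum_erase _ g hb, ← Finset.add_sum_erase _ f hb]
  have : ∑ x ∈ (Finset.univ.erase a).erase b, g x = ∑ x ∈ (Finset.univ.erase a).erase b, f x := by
    apply Finset.sum_congr rfl
    intro x hx
    simp only [Finset.mem_erase] at hx
    exact ho x hx.2.1 hx.1
  omega

theorem TermMove.degree_le {t t' : STerm S ar} (h : TermMove t t') : t'.degree ≤ t.degree := by
  induction h with
  | here g c j j' hj hne =>
    have hjj : j ≠ j' := by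
      intro h
      rw [h] at hj
      omega
    simp only [degree]
    refine Nat.add_le_add_left (sum_two _ _ j j' hjj ?_ ?_) 1
    · intro i h1 h2
      simp [h1, h2]
    · simpa [hjj, degree] using degree_graftRight (c j) (c j')
  | child g c i t' _ ih =>
    simp only [degree]
    refine Nat.add_le_add_left (Finset.sum_le_sum fun k _ => ?_) 1
    by_cases hk : k = i
    · subst hk
      simpa using ih
    · simp [hk]

theorem TermMove.gset_subset {t t' : STerm S ar} (h : TermMove t t') : t'.gset ⊆ t.gset := by
  induction h with
  | here g c j j' hj hne =>
    simp only [gset]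
    apply Set.insert_subset_insert
    apply Set.iUnion_subset
    intro i
    by_cases h2 : i = j'
    · subst h2
      simp [gset]
    · by_cases h1 : i = j
      · subst h1
        rw [Function.update_of_ne h2, Function.update_self]
        exact (gset_graftRight _ _).trans (Set.union_subset
          (Set.subset_iUnion (fun i => (c i).gset) i) (Set.subset_iUnion (fun i => (c i).gset) j'))
      · rw [Function.update_of_ne h2, Function.update_of_ne h1]
        exact Set.subset_iUnion (fun i => (c i).gset) i
  | child g c i t' _ ih =>
    simp only [gset]
    apply Set.insert_subset_insert
    apply Set.iUnion_subset
    intro k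
    by_cases hk : k = i
    · subst hk
      rw [Function.update_self]
      exact ih.trans (Set.subset_iUnion (fun i => (c i).gset) k)
    · rw [Function.update_of_ne hk]
      exact Set.subset_iUnion (fun i => (c i).gset) k

theorem finite_terms (G : Set S) (hG : G.Finite) (n : ℕ) :
    {t : STerm S ar | t.gset ⊆ G ∧ t.degree ≤ n}.Finite := by
  induction n with
  | zero =>
    apply (Set.finite_singleton (leaf : STerm S ar)).subset
    rintro (_ | ⟨g, c⟩) ⟨_, h⟩
    · rfl
    · simp [degree] at h
  | succ n ih =>
    apply ((Set.finite_singleton (leaf : STerm S ar)).union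
      (hG.biUnion (t := fun g => (node g) '' (Set.pi Set.univ fun _ : Fin (ar g) =>
        {t : STerm S ar | t.gset ⊆ G ∧ t.degree ≤ n}))
        (fun g _ => (Set.Finite.pi' fun _ => ih).subset (by
          intro c hc i
          exact hc i (Set.mem_univ i)) |>.image _))).subset
    rintro (_ | ⟨g, c⟩) ⟨h1, h⟩
    · left
      rfl
    · right
      simp only [gset, Set.insert_subset_iff, Set.iUnion_subset_iff] at h1
      refine Set.mem_biUnion h1.1 ⟨c, fun i _ => ⟨h1.2 i, ?_⟩, rfl⟩
      have := Finset.single_le_sum (f := fun i => (c i).degree) (fun _ _ => Nat.zero_le _)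
        (Finset.mem_univ i)
      simp only [degree] at h this
      omega

end STerm

theorem forest_inv {S : Type} {ar : S → ℕ} {f f' : List (STerm S ar)} (G : Set S)
    (h : ForestMove f f') (hG : ∀ t ∈ f, t.gset ⊆ G) :
    (∀ t ∈ f', t.gset ⊆ G) ∧ forestDeg f' ≤ forestDeg f ∧ f'.length ≤ f.length := by
  cases h with
  | root pre t t' post hne =>
    simp only [List.mem_append, List.mem_cons] at hG
    refine ⟨?_, ?_, by simp⟩
    · intro s hs
      simp only [List.mem_append, List.mem_cons] at hs
      rcases hs with hs | rfl | hs
      · exact hG _ (by tauto)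
      · exact (STerm.gset_graftRight _ _).trans
          (Set.union_subset (hG _ (by tauto)) (hG _ (by tauto)))
      · exact hG _ (by tauto)
    · have := STerm.degree_graftRight t t'
      simp [forestDeg]
      omega
  | tree pre t t' post hm =>
    simp only [List.mem_append, List.mem_cons] at hG
    refine ⟨?_, ?_, by simp⟩
    · intro s hs
      simp only [List.mem_append, List.mem_cons] at hs
      rcases hs with hs | rfl | hs
      · exact hG _ (by tauto)
      · exact hm.gset_subset.trans (hG _ (by tauto))
      · exact hG _ (by tauto)
    · have := hm.degree_le
      simp [forestDeg]
      omega

theorem forest_inv_star {S : Type} {ar : S → ℕ} {f f' : List (STerm S ar)} (G : Set S)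
    (h : EWLe f f') (hG : ∀ t ∈ f, t.gset ⊆ G) :
    (∀ t ∈ f', t.gset ⊆ G) ∧ forestDeg f' ≤ forestDeg f ∧ f'.length ≤ f.length := by
  induction h with
  | refl => exact ⟨hG, le_rfl, le_rfl⟩
  | tail _ hm ih =>
    have := forest_inv G hm ih.1
    exact ⟨this.1, this.2.1.trans ih.2.1, this.2.2.trans ih.2.2⟩

theorem upper_finite {S : Type} {ar : S → ℕ} (f : List (STerm S ar)) :
    {f' : List (STerm S ar) | EWLe f f'}.Finite := by
  let G : Set S := ⋃ t ∈ {t | t ∈ f}, t.gset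
  have hGf : G.Finite := f.finite_toSet.biUnion fun t _ => t.gset_finite
  have hG : ∀ t ∈ f, t.gset ⊆ G := fun t ht => Set.subset_biUnion_of_mem (u := STerm.gset) ht
  let T := {t : STerm S ar | t.gset ⊆ G ∧ t.degree ≤ forestDeg f}
  have hT : T.Finite := STerm.finite_terms G hGf _
  haveI : Finite T := hT
  apply ((List.finite_length_le T f.length).image (List.map Subtype.val)).subset
  intro f' hf'
  obtain ⟨h1, h2, h3⟩ := forest_inv_star G hf' hG
  have hm : ∀ t ∈ f', t ∈ T := fun t ht =>
    ⟨h1 t ht, (List.single_le_sum (by simp) _ (List.mem_map_of_mem ht)).trans h2⟩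
  refine ⟨f'.attach.map fun t => ⟨t.1, hm _ t.2⟩, by simpa using h3, ?_⟩
  simp

/-- upper sets of the easterly wind order are finite; in particular all
intervals are finite. -/
theorem easterly_wind_upperSet_finite {S : Type} {ar : S → ℕ} (hpos : ∀ g : S, 0 < ar g) :
    (∀ f : List (STerm S ar), IsReducedF f →
      {f' : List (STerm S ar) | IsReducedF f' ∧ EWLe f f'}.Finite) ∧
    (∀ f₁ f₂ : List (STerm S ar), IsReducedF f₁ → IsReducedF f₂ →
      {g : List (STerm S ar) | IsReducedF g ∧ EWLe f₁ g ∧ EWLe g f₂}.Finite) := by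
  refine ⟨fun f _ => (upper_finite f).subset fun f' h => h.2, fun f₁ f₂ _ _ => (upper_finite f₁).subset fun g h => h.2.1⟩
end

section
/- Let S be a positive signature. For any reduced S-forests f' and f'', the over product is less than or equal to the under product in the easterly wind order: f' ▽ f'' ≼ f' △ f''. -/
open scoped BigOperators

namespace OLU

open STerm

variable {S : Type} {ar : S → ℕ}

/-- number of leaves before the block `i`. -/
def off {n : ℕ} (a : Fin n → ℕ) (i : Fin n) : ℕ :=
  ∑ j : Fin n, if (j : ℕ) < (i : ℕ) then a j else 0

lemma off_zero {n : ℕ} (a : Fin (n + 1) → ℕ) : off a 0 = 0 := by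
  simp [off]

lemma off_succ {n : ℕ} (a : Fin (n + 1) → ℕ) (i : Fin n) :
    off a i.succ = a 0 + off (fun j => a j.succ) i := by
  simp [off, Fin.sum_univ_succ]

lemma off_add_le {n : ℕ} (a : Fin n → ℕ) (i j : Fin n) (h : i < j) :
    off a i + a i ≤ off a j := by
  have e : a i = ∑ k : Fin n, if k = i then a k else 0 := by simp
  rw [e, off, off, ← Finset.sum_add_distrib]
  apply Finset.sum_le_sum
  intro k _
  have h' : (i : ℕ) < j := h
  by_cases h1 : k = i
  · subst h1; simp [h']
  · by_cases h2 : (k : ℕ) < i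
    · have : (k : ℕ) < j := by omega
      simp [h1, h2, this]
    · simp [h1, h2]

lemma off_add_le_sum {n : ℕ} (a : Fin n → ℕ) (i : Fin n) :
    off a i + a i ≤ ∑ k, a k := by
  have e : a i = ∑ k : Fin n, if k = i then a k else 0 := by simp
  rw [e, off, ← Finset.sum_add_distrib]
  apply Finset.sum_le_sum
  intro k _
  by_cases h1 : k = i
  · subst h1; simp
  · by_cases h2 : (k : ℕ) < i <;> simp [h1, h2]

lemma off_next {n : ℕ} (a : Fin n → ℕ) (i j : Fin n) (h : (j : ℕ) = i + 1) :
    off a j = off a i + a i := by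
  have e : a i = ∑ k : Fin n, if k = i then a k else 0 := by simp
  rw [e, off, off, ← Finset.sum_add_distrib]
  apply Finset.sum_congr rfl
  intro k _
  by_cases h1 : k = i
  · subst h1; simp [h]
  · have : (k : ℕ) ≠ i := fun h => h1 (Fin.ext h)
    by_cases h2 : (k : ℕ) < i
    · have : (k : ℕ) < j := by omega
      simp [h1, h2, this]
    · have : ¬ (k : ℕ) < j := by omega
      simp [h1, h2, this]

lemma off_last {n : ℕ} (a : Fin n → ℕ) (i : Fin n) (h : (i : ℕ) + 1 = n) :
    off a i + a i = ∑ k, a k := by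
  have e : a i = ∑ k : Fin n, if k = i then a k else 0 := by simp
  rw [e, off, ← Finset.sum_add_distrib]
  apply Finset.sum_congr rfl
  intro k _
  by_cases h1 : k = i
  · subst h1; simp
  · have : (k : ℕ) ≠ i := fun h => h1 (Fin.ext h)
    have : (k : ℕ) < i := by omega
    simp [h1, this]

lemma exists_block {n : ℕ} (a : Fin n → ℕ) (p : ℕ) (hp : p < ∑ k, a k) :
    ∃ i q, q < a i ∧ p = off a i + q := by
  induction n generalizing p with
  | zero => simp at hp
  | succ n ih =>
    by_cases h : p < a 0
    · exact ⟨0, p, h, by simp [off_zero]⟩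
    · rw [Fin.sum_univ_succ] at hp
      obtain ⟨i, q, h1, h2⟩ := ih (fun j => a j.succ) (p - a 0) (by omega)
      exact ⟨i.succ, q, h1, by rw [off_succ]; omega⟩

lemma flatten_split {α : Type*} {n : ℕ} (f : Fin n → List α) (P : α → Bool) (i : Fin n) :
    ∃ A B, (List.ofFn f).flatten = A ++ (f i ++ B) ∧
      A.countP P = off (fun j => (f j).countP P) i := by
  induction n with
  | zero => exact i.elim0
  | succ n ih =>
    induction i using Fin.cases with
    | zero =>
      exact ⟨[], (List.ofFn fun j : Fin n => f j.succ).flatten, by simp [List.ofFn_succ],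
        by simp [off_zero]⟩
    | succ i =>
      obtain ⟨A, B, h1, h2⟩ := ih (fun j => f j.succ) i
      exact ⟨f 0 ++ A, B, by simp [List.ofFn_succ, h1], by simp [off_succ, h2]⟩

lemma countP_flatten {α : Type*} {n : ℕ} (f : Fin n → List α) (P : α → Bool) :
    (List.ofFn f).flatten.countP P = ∑ j, (f j).countP P := by
  induction n with
  | zero => simp
  | succ n ih => simp [List.ofFn_succ, Fin.sum_univ_succ, ih]

lemma countP_preo (t : STerm S ar) : t.preo.countP (fun o => o.isNone) = t.arity := by
  induction t with
  | leaf => simp [preo, arity]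
  | node g c ih =>
    have := countP_flatten (fun i => (c i).preo) (fun o => o.isNone)
    simp only [ih] at this
    rw [preo, List.countP_cons, this]
    simp [arity]

/-- grafting along a function. -/
def F : STerm S ar → (ℕ → STerm S ar) → STerm S ar
  | leaf, φ => φ 0
  | node g c, φ => node g fun i => F (c i) fun q => φ (off (fun j => (c j).arity) i + q)

lemma F_congr (t : STerm S ar) (φ ψ : ℕ → STerm S ar) (h : ∀ p < t.arity, φ p = ψ p) :
    F t φ = F t ψ := by
  induction t generalizing φ ψ with
  | leaf => exact h 0 (by simp [arity])
  | node g c ih =>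
    simp only [F]
    congr 1
    funext i
    apply ih
    intro p hp
    apply h
    have := off_add_le_sum (fun j => (c j).arity) i
    simp only [arity]
    omega

lemma graftList_eq (t : STerm S ar) (l : List (STerm S ar)) :
    t.graftList l = F t fun p => l.getD p leaf := by
  induction t generalizing l with
  | leaf => cases l <;> simp [graftList, F]
  | node g c ih =>
    simp only [graftList, F]
    congr 1
    funext i
    rw [ih]
    apply F_congr
    intro p hp
    simp only [List.getD_eq_getElem?_getD, List.getElem?_take, List.getElem?_drop, hp, if_true]
    rfl

lemma F_leaf (t : STerm S ar) : F t (fun _ => leaf) = t := by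
  induction t with
  | leaf => rfl
  | node g c ih => simp [F, ih]

lemma arity_pos (hpos : ∀ g : S, 0 < ar g) (t : STerm S ar) : 0 < t.arity := by
  induction t with
  | leaf => simp [arity]
  | node g c ih =>
    have := off_add_le_sum (fun j => (c j).arity) ⟨0, hpos g⟩
    have := ih ⟨0, hpos g⟩
    simp only [arity]
    omega

lemma F_graftRight (hpos : ∀ g : S, 0 < ar g) (t s : STerm S ar) (φ : ℕ → STerm S ar)
    (h : φ (t.arity - 1) = leaf) :
    (F t φ).graftRight s = F t (Function.update φ (t.arity - 1) s) := by
  induction t generalizing φ with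
  | leaf =>
    simp only [F, arity] at *
    simp [h, graftRight]
  | node g c ih =>
    simp only [F, graftRight]
    congr 1
    funext i
    have hp := arity_pos hpos (c i)
    have hg := hpos g
    split_ifs with hi
    · have hl := off_last (fun j => (c j).arity) i (by omega)
      simp only [arity] at h ⊢
      rw [← hl] at h ⊢
      rw [ih]
      · apply F_congr
        intro p hp'
        by_cases hpe : p = (c i).arity - 1
        · subst hpe
          rw [Function.update_self, Nat.add_sub_assoc (by omega), Function.update_self]
        · rw [Function.update_of_ne hpe, Function.update_of_ne (by omega)]
      · rw [← h]
        congr 1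
        omega
    · apply F_congr
      intro p hp'
      have hlt : i < ⟨ar g - 1, by omega⟩ := by
        have := i.2
        show (i : ℕ) < ar g - 1
        omega
      have h1 := off_add_le (fun j => (c j).arity) _ _ hlt
      have h2 := off_add_le_sum (fun j => (c j).arity) ⟨ar g - 1, by omega⟩
      have h3 := arity_pos hpos (c ⟨ar g - 1, by omega⟩)
      simp only [arity]
      rw [Function.update_of_ne]
      simp only at h1 h2 h3 ⊢
      omega

/-- every internal node has at most `p` leaves before it. -/
def Ext (t : STerm S ar) (p : ℕ) : Prop :=
  ∀ u g v, t.preo = u ++ some g :: v → u.countP (fun o => o.isNone) ≤ p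

lemma Ext_child (g : S) (c : Fin (ar g) → STerm S ar) (i : Fin (ar g)) (q : ℕ)
    (h : Ext (node g c) (off (fun j => (c j).arity) i + q)) : Ext (c i) q := by
  intro u g' v he
  obtain ⟨A, B, h1, h2⟩ := flatten_split (fun j => (c j).preo) (fun o => o.isNone) i
  have := h (some g :: (A ++ u)) g' (v ++ B) (by simp [preo, h1, he])
  simp only [countP_preo] at h2
  simp [h2] at this
  exact this

lemma Ext_right (g : S) (c : Fin (ar g) → STerm S ar) (i j : Fin (ar g)) (hij : i < j) (q : ℕ)
    (hq : q < (c i).arity)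
    (h : Ext (node g c) (off (fun j => (c j).arity) i + q)) : c j = leaf := by
  cases hc : c j with
  | leaf => rfl
  | node g' c' =>
    exfalso
    obtain ⟨A, B, h1, h2⟩ := flatten_split (fun j => (c j).preo) (fun o => o.isNone) j
    have := h (some g :: A) g' ((List.ofFn fun i => (c' i).preo).flatten ++ B)
      (by simp [preo, h1, hc])
    simp only [countP_preo] at h2
    simp [h2] at this
    have := off_add_le (fun j => (c j).arity) i j hij
    omega

lemma extremalCount_le (t : STerm S ar) : t.extremalCount ≤ t.arity := by
  have h := List.takeWhile_append_dropWhile (p := fun o : Option S => o.isNone) (l := t.preo.reverse)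
  have h2 := congrArg (List.countP (fun o : Option S => o.isNone)) h
  rw [List.countP_append, List.countP_reverse, countP_preo, List.countP_eq_length.2] at h2
  · unfold extremalCount; omega
  · intro a ha
    exact List.mem_takeWhile_imp ha

lemma takeWhile_le {α : Type*} (P : α → Bool) (v : List α) (x : α) (w : List α)
    (hx : P x = false) :
    ((v ++ x :: w).takeWhile P).length ≤ v.countP P := by
  induction v with
  | nil => simp [hx]
  | cons a v ih =>
    by_cases ha : P a = true
    · simpa [List.takeWhile_cons, ha] using ih
    · simp [List.takeWhile_cons, ha]

lemma Ext_of (t : STerm S ar) (p : ℕ) (h : t.arity - t.extremalCount ≤ p) : Ext t p := by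
  intro u g v he
  have h1 : t.extremalCount ≤ v.countP (fun o => o.isNone) := by
    unfold extremalCount
    rw [he]
    have e : (u ++ some g :: v).reverse = v.reverse ++ (some g :: u.reverse) := by simp
    rw [e]
    exact takeWhile_le _ _ _ _ (by simp) |>.trans (by rw [List.countP_reverse])
  have h2 := countP_preo t
  rw [he] at h2
  simp at h2
  omega

lemma swap (hpos : ∀ g : S, 0 < ar g) (t s : STerm S ar) (φ : ℕ → STerm S ar) (p : ℕ)
    (hp : p + 1 < t.arity) (hE : Ext t p) (h1 : φ p = leaf) (h2 : φ (p + 1) = s) (hs : s ≠ leaf) :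
    TermMove (F t φ) (F t (Function.update (Function.update φ p s) (p + 1) leaf)) := by
  induction t generalizing φ p with
  | leaf => simp [arity] at hp
  | node g c ih =>
    simp only [arity] at hp
    obtain ⟨i, q, hq, rfl⟩ := exists_block (fun j => (c j).arity) p (by omega)
    have hle := off_add_le (fun j => (c j).arity)
    by_cases hq' : q + 1 < (c i).arity
    · have := TermMove.child g (fun i => F (c i) fun q => φ (off (fun j => (c j).arity) i + q)) i _
        (ih i (fun q => φ (off (fun j => (c j).arity) i + q)) q hq' (Ext_child g c i q hE) h1 h2)
      simp only [F]
      convert this using 2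
      funext k
      rcases lt_trichotomy k i with hk | hk | hk
      · rw [Function.update_of_ne hk.ne]
        apply F_congr
        intro r hr
        have := hle _ _ hk
        rw [Function.update_of_ne (by omega), Function.update_of_ne (by omega)]
      · subst hk
        rw [Function.update_self]
        apply F_congr
        intro r hr
        simp only [Function.update_apply, add_assoc, Nat.add_left_cancel_iff]
      · rw [Function.update_of_ne hk.ne']
        apply F_congr
        intro r hr
        have := hle _ _ hk
        rw [Function.update_of_ne (by omega), Function.update_of_ne (by omega)]
    · have hi : (i : ℕ) + 1 < ar g := by
        by_contra hcon
        have := off_last (fun j => (c j).arity) i (by omega)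
        simp only at this
        omega
      obtain ⟨j, hj⟩ : ∃ j : Fin (ar g), (j : ℕ) = i + 1 := ⟨⟨i + 1, hi⟩, rfl⟩
      have hij : i < j := by show (i : ℕ) < j; omega
      have hcj := Ext_right g c i j hij q hq hE
      have hoff := off_next (fun j => (c j).arity) i j hj
      have hoff' : off (fun j => (c j).arity) j = off (fun j => (c j).arity) i + q + 1 := by omega
      have hval : F (c j) (fun q => φ (off (fun j => (c j).arity) j + q)) = s := by
        rw [hcj]; simp only [F]; rw [← h2]; congr 1
      have := TermMove.here g (fun i => F (c i) fun q => φ (off (fun j => (c j).arity) i + q)) i j hj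
        (by simp only [hval]; exact hs)
      simp only [F]
      convert this using 2
      funext k
      by_cases hkj : k = j
      · subst hkj
        rw [Function.update_self, hcj]
        simp only [F, hoff', add_zero]
        rw [Function.update_self]
      rw [Function.update_of_ne hkj]
      by_cases hki : k = i
      · subst hki
        rw [Function.update_self]
        simp only [hval]
        have hq1 : q = (c k).arity - 1 := by omega
        rw [F_graftRight hpos _ _ _ (by rw [← hq1]; exact h1)]
        apply F_congr
        intro r hr
        rw [Function.update_of_ne (by omega), ← hq1]
        simp only [Function.update_apply, Nat.add_left_cancel_iff]
      · rw [Function.update_of_ne hki]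
        apply F_congr
        intro r hr
        rcases lt_or_gt_of_ne hki with hk | hk
        · have := hle _ _ hk
          rw [Function.update_of_ne (by omega), Function.update_of_ne (by omega)]
        · have hjk : j < k := by
            have : (k : ℕ) ≠ j := fun h => hkj (Fin.ext h)
            have : (i : ℕ) < k := hk
            show (j : ℕ) < k
            omega
          have := hle _ _ hjk
          rw [hcj] at this
          simp only [arity] at this
          rw [Function.update_of_ne (by omega), Function.update_of_ne (by omega)]

lemma slide (hpos : ∀ g : S, 0 < ar g) (t s : STerm S ar) (φ : ℕ → STerm S ar) (p d : ℕ)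
    (hd : p + d + 1 = t.arity) (hE : t.arity - t.extremalCount ≤ p)
    (h1 : ∀ r, p ≤ r → φ r = leaf) (hs : s ≠ leaf) :
    Relation.ReflTransGen TermMove (F t (Function.update φ (t.arity - 1) s))
      (F t (Function.update φ p s)) := by
  induction d generalizing p with
  | zero =>
    have : t.arity - 1 = p := by omega
    rw [this]
  | succ d ih =>
    refine (ih (p + 1) (by omega) (by omega) (fun r hr => h1 r (by omega))).tail ?_
    have := swap hpos t s (Function.update φ (p + 1) s) p (by omega) (Ext_of t p hE)
      (by rw [Function.update_of_ne (by omega)]; exact h1 p le_rfl) (by rw [Function.update_self]) hs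
    convert this using 2
    funext r
    have := h1 (p + 1) (by omega)
    by_cases hr : r = p + 1
    · subst hr
      rw [Function.update_self, Function.update_of_ne (by omega), this]
    · rw [Function.update_of_ne hr]
      simp only [Function.update_apply, hr, if_false]

lemma lift_forest (pre post : List (STerm S ar)) (t t' : STerm S ar)
    (h : Relation.ReflTransGen TermMove t t') :
    EWLe (pre ++ t :: post) (pre ++ t' :: post) := by
  induction h with
  | refl => exact Relation.ReflTransGen.refl
  | tail _ h ih => exact ih.tail (ForestMove.tree _ _ _ _ h)

/-- partial graft. -/
def phi (t : STerm S ar) (l : List (STerm S ar)) (p : ℕ) : STerm S ar :=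
  if p < t.arity - t.extremalCount then leaf else l.getD (p - (t.arity - t.extremalCount)) leaf

lemma underSub_eq (t : STerm S ar) (l : List (STerm S ar)) : underSub t l = F t (phi t l) := by
  rw [underSub, graftList_eq]
  apply F_congr
  intro p hp
  rw [List.getD_eq_getElem _ _ (by simpa using hp)]
  simp [phi]

lemma main (hpos : ∀ g : S, 0 < ar g) (pre : List (STerm S ar)) (t : STerm S ar)
    (f : List (STerm S ar)) (hf : IsReducedF f) (k : ℕ) (hk : k ≤ t.extremalCount) :
    EWLe (pre ++ t :: f) (pre ++ F t (phi t (f.take k)) :: f.drop k) := by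
  induction k with
  | zero =>
    have : phi t (f.take 0) = fun _ => leaf := by
      funext p; simp [phi]
    rw [this, F_leaf]
    exact Relation.ReflTransGen.refl
  | succ k ih =>
    have ih := ih (by omega)
    by_cases hl : k < f.length
    · have hn := extremalCount_le t
      rw [List.drop_eq_getElem_cons hl] at ih
      have hs : f[k] ≠ leaf := hf _ (List.getElem_mem hl)
      have hleaf : ∀ r, t.arity - t.extremalCount + k ≤ r → phi t (f.take k) r = leaf := by
        intro r hr
        unfold phi
        rw [if_neg (by omega)]
        apply List.getD_eq_default
        simp
        omega
      have hm := ih.tail (ForestMove.root _ _ _ _ hs)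
      rw [F_graftRight hpos _ _ _ (hleaf _ (by omega))] at hm
      have h2 := hm.trans (lift_forest _ _ _ _ (slide hpos t f[k] (phi t (f.take k))
        (t.arity - t.extremalCount + k) (t.extremalCount - k - 1) (by omega) (by omega) hleaf hs))
      suffices hphi : phi t (f.take (k + 1)) = Function.update (phi t (f.take k))
          (t.arity - t.extremalCount + k) f[k] by
        rw [hphi]
        exact h2
      funext r
      by_cases hr : r = t.arity - t.extremalCount + k
      · subst hr
        simp [phi, Function.update_self, List.getElem?_take, hl]
      · rw [Function.update_of_ne hr]
        unfold phi
        split_ifs with h3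
        · rfl
        · simp only [List.getD_eq_getElem?_getD, List.getElem?_take]
          by_cases h4 : r - (t.arity - t.extremalCount) < k
          · rw [if_pos (by omega), if_pos h4]
          · rw [if_neg (by omega), if_neg h4]
    · rw [List.take_of_length_le (by omega), List.drop_of_length_le (by omega)] at ih ⊢
      exact ih

end OLU

/-- for reduced forests `f'` and `f''`, the over product (concatenation) is
smaller than or equal to the under product in the easterly wind order. -/
theorem over_le_under {S : Type} {ar : S → ℕ} (hpos : ∀ g : S, 0 < ar g)
    (f' f'' : List (STerm S ar)) (h' : IsReducedF f') (h'' : IsReducedF f'') :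
    EWLe (f' ++ f'') (underP f' f'') := by
  rcases List.eq_nil_or_concat f' with rfl | ⟨pre, t, rfl⟩
  · exact Relation.ReflTransGen.refl
  · have := OLU.main hpos pre t f'' h'' t.extremalCount le_rfl
    rw [← OLU.underSub_eq] at this
    simpa [underP] using this
end
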